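/- Let γ ∈ (1,2), T > 0 and G ∈ S_Rob, with G(s,0⁻) := G₋(s,0) and G(s,0⁺) := G₊(s,0). Then lim_{n→∞} sup_{s∈[0,T]} | ∑_{z=0}^∞ ∑_{x=−∞}^{−1} p(z−x) ( (G(s, z/n) − G(s, x/n)) − (G(s,0⁺) − G(s,0⁻)) ) | = 0. -/

import Mathlib

open MeasureTheory Filter Set Topology

/-- Transition probability `p(z) = c⋅|z|^{-γ-1}` for `z ≠ 0`, `p(0)=0`. -/
noncomputable def transP (c γ : ℝ) (z : ℤ) : ℝ :=
  if z = 0 then 0 else c * |(z : ℝ)| ^ (-γ - 1)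

/-- `G ∈ S_Dif = P([0,T], C_c^∞(ℝ))`. -/
def SDifMem (G : ℝ → ℝ → ℝ) : Prop :=
  ∃ (k : ℕ) (a : ℕ → ℝ → ℝ),
    (∀ j : ℕ, ContDiff ℝ (⊤ : ℕ∞) (a j) ∧ HasCompactSupport (a j)) ∧
    ∀ t u : ℝ, G t u = ∑ j ∈ Finset.range (k + 1), a j u * t ^ j

/-- Functions in `S_Dif` have a modulus of continuity at `0` that is bounded and uniform in time. -/
lemma SDifMem.exists_modulus {G : ℝ → ℝ → ℝ} (hG : SDifMem G) (T : ℝ) :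
    ∃ (B : ℝ → ℝ) (C : ℝ), Continuous B ∧ B 0 = 0 ∧ (∀ u, 0 ≤ B u) ∧ (∀ u, B u ≤ C) ∧
      ∀ s ∈ Set.Icc (0 : ℝ) T, ∀ u, |G s u - G s 0| ≤ B u := by
  obtain ⟨k, a, ha, hGa⟩ := hG
  have hbound : ∀ j, ∃ C, ∀ u, ‖a j u‖ ≤ C := fun j =>
    (ha j).2.exists_bound_of_continuous (ha j).1.continuous
  choose C hC using hbound
  refine ⟨fun u => ∑ j ∈ Finset.range (k + 1), |a j u - a j 0| * |T| ^ j,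
    ∑ j ∈ Finset.range (k + 1), (C j + C j) * |T| ^ j, ?_, by simp, ?_, ?_, ?_⟩
  · have hcont : ∀ j, Continuous (a j) := fun j => (ha j).1.continuous
    fun_prop
  · intro u
    positivity
  · intro u
    refine Finset.sum_le_sum fun j _ => ?_
    gcongr
    exact (abs_sub _ _).trans (add_le_add (hC j u) (hC j 0))
  · intro s hs u
    rw [hGa, hGa, ← Finset.sum_sub_distrib]
    refine (Finset.abs_sum_le_sum_abs _ _).trans (Finset.sum_le_sum fun j _ => ?_)
    rw [← sub_mul, abs_mul, abs_pow]
    have hsT : |s| ≤ |T| := abs_le_abs_of_nonneg hs.1 hs.2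
    gcongr

lemma transP_nonneg {c : ℝ} (hc : 0 ≤ c) (γ : ℝ) (z : ℤ) : 0 ≤ transP c γ z := by
  unfold transP
  split_ifs <;> positivity

/-- For `γ > 1` the jump rates across the origin are summable. -/
lemma summable_transP_across_origin {c γ : ℝ} (hc : 0 ≤ c) (hγ : 1 < γ) :
    Summable fun q : ℕ × ℕ => transP c γ ((q.1 : ℤ) - (-(q.2 : ℤ) - 1)) := by
  set r : ℝ := (-γ - 1) / 2 with hr
  have hsum : Summable fun m : ℕ => ((m : ℝ) + 1) ^ r := by
    have h := (summable_nat_add_iff 1).2 (Real.summable_nat_rpow.2 (by linarith : r < -1))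
    simpa using h
  have hnonneg : 0 ≤ fun m : ℕ => ((m : ℝ) + 1) ^ r := fun m => by positivity
  refine ((hsum.mul_of_nonneg hsum hnonneg hnonneg).mul_left c).of_nonneg_of_le
    (fun q => transP_nonneg hc γ _) ?_
  rintro ⟨i, j⟩
  have hne : ((i : ℤ) - (-(j : ℤ) - 1)) ≠ 0 := by omega
  have hcast : |(((i : ℤ) - (-(j : ℤ) - 1) : ℤ) : ℝ)| = (i : ℝ) + j + 1 := by
    push_cast
    rw [show (i : ℝ) - (-(j : ℝ) - 1) = i + j + 1 by ring, abs_of_nonneg (by positivity)]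
  have hi := i.cast_nonneg (α := ℝ)
  have hj := j.cast_nonneg (α := ℝ)
  have hr0 : r ≤ 0 := by linarith
  have hsplit : -γ - 1 = r + r := by ring
  simp only [transP, if_neg hne, hcast]
  rw [hsplit, Real.rpow_add (by positivity)]
  gcongr c * (?_ * ?_)
  · exact Real.rpow_le_rpow_of_nonpos (by positivity) (by linarith) hr0
  · exact Real.rpow_le_rpow_of_nonpos (by positivity) (by linarith) hr0

theorem stmt17 (γ c T : ℝ) (hγ : γ ∈ Set.Ioo (1 : ℝ) 2) (hc : 0 < c)
    (hprob : HasSum (transP c γ) 1) (hT : 0 < T)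
    -- G ∈ S_Rob with decomposition G = G₋ 1_{u<0} + G₊ 1_{u≥0};
    -- G(s,0⁻) = G₋(s,0) and G(s,0⁺) = G₊(s,0)
    (G Gm Gp : ℝ → ℝ → ℝ) (hGm : SDifMem Gm) (hGp : SDifMem Gp)
    (hG : ∀ t u : ℝ, G t u = if u < 0 then Gm t u else Gp t u) :
    Tendsto (fun n : ℕ =>
        ⨆ s ∈ Set.Icc (0 : ℝ) T,
          |∑' q : ℕ × ℕ,  -- z = q.1 ≥ 0, x = −q.2 − 1 ≤ −1
            transP c γ ((q.1 : ℤ) - (-(q.2 : ℤ) - 1)) *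
              ((G s ((q.1 : ℝ) / n) - G s ((-(q.2 : ℝ) - 1) / n)) - (Gp s 0 - Gm s 0))|)
      atTop (𝓝 0) := by
  obtain ⟨Bm, Cm, hBm, hBm0, hBmn, hBmC, hGmB⟩ := hGm.exists_modulus T
  obtain ⟨Bp, Cp, hBp, hBp0, hBpn, hBpC, hGpB⟩ := hGp.exists_modulus T
  set w : ℕ × ℕ → ℝ := fun q => transP c γ ((q.1 : ℤ) - (-(q.2 : ℤ) - 1)) with hw
  have hw0 : ∀ q, 0 ≤ w q := fun q => transP_nonneg hc.le γ _
  have hsum : Summable fun q => w q * (Cp + Cm) :=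
    (summable_transP_across_origin hc.le hγ.1).mul_right _
  set F : ℕ → ℕ × ℕ → ℝ := fun n q =>
    w q * (Bp ((q.1 : ℝ) / n) + Bm ((-(q.2 : ℝ) - 1) / n)) with hF
  have hF0 : ∀ n q, 0 ≤ F n q := fun n q =>
    mul_nonneg (hw0 q) (add_nonneg (hBpn _) (hBmn _))
  have hFC : ∀ n q, F n q ≤ w q * (Cp + Cm) := fun n q =>
    mul_le_mul_of_nonneg_left (add_le_add (hBpC _) (hBmC _)) (hw0 q)
  have hlim : Tendsto (fun n => ∑' q, F n q) atTop (𝓝 0) := by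
    have hpt : ∀ q, Tendsto (fun n => F n q) atTop (𝓝 0) := by
      intro q
      have hp := (hBp.tendsto 0).comp (tendsto_const_div_atTop_nhds_zero_nat (q.1 : ℝ))
      have hm := (hBm.tendsto 0).comp (tendsto_const_div_atTop_nhds_zero_nat (-(q.2 : ℝ) - 1))
      rw [hBp0] at hp
      rw [hBm0] at hm
      simpa using (hp.add hm).const_mul (w q)
    have h := tendsto_tsum_of_dominated_convergence (𝓕 := atTop) hsum hpt
      (Eventually.of_forall fun n q => by
        rw [Real.norm_of_nonneg (hF0 n q)]
        exact hFC n q)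
    simpa using h
  refine squeeze_zero' (Eventually.of_forall fun n => Real.iSup_nonneg fun s =>
    Real.iSup_nonneg fun _ => abs_nonneg _) ?_ hlim
  filter_upwards [eventually_gt_atTop 0] with n hn
  have hn' : (0 : ℝ) < n := by exact_mod_cast hn
  refine Real.iSup_le (fun s => Real.iSup_le (fun hs => ?_) (tsum_nonneg (hF0 n)))
    (tsum_nonneg (hF0 n))
  have hFs : Summable (F n) := hsum.of_nonneg_of_le (hF0 n) (hFC n)
  rw [← Real.norm_eq_abs]
  refine tsum_of_norm_bounded hFs.hasSum fun q => ?_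
  have hz : ¬ ((q.1 : ℝ) / n < 0) := not_lt.2 (by positivity)
  have hx : (-(q.2 : ℝ) - 1) / n < 0 :=
    div_neg_of_neg_of_pos (by linarith [q.2.cast_nonneg (α := ℝ)]) hn'
  rw [norm_mul, Real.norm_of_nonneg (hw0 q), hG, hG, if_neg hz, if_pos hx, Real.norm_eq_abs,
    sub_sub_sub_comm]
  exact mul_le_mul_of_nonneg_left
    ((abs_sub _ _).trans (add_le_add (hGpB s hs _) (hGmB s hs _))) (hw0 q)
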